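/- Let 0 < d < n and let Ω ⊂ ℝⁿ be open with d-Ahlfors regular boundary with constant A. Let 0 < a < b. Then there is a constant C depending only on a, b, A, d and n such that for every Lebesgue-measurable F : Ω → ℝ and every λ > 0, σ({ξ ∈ ∂Ω : N_b F(ξ) > λ}) ≤ C·σ({ξ ∈ ∂Ω : N_a F(ξ) > λ}). Consequently, for every 1 ≤ q ≤ ∞ there is C' depending only on a, b, A, d, n, q such that ‖N_a F‖_{L^q(∂Ω,σ)} ≤ ‖N_b F‖_{L^q(∂Ω,σ)} ≤ C'·‖N_a F‖_{L^q(∂Ω,σ)}. -/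

import Mathlib

open MeasureTheory Metric Set Filter
open scoped ENNReal NNReal Topology RealInnerProductSpace

noncomputable section

namespace Paper

/-- Euclidean space `ℝⁿ`. -/
abbrev Euc (n : ℕ) : Type := EuclideanSpace ℝ (Fin n)

variable {n : ℕ}

/-- `δ(x)`: the distance from `x` to the boundary of `Ω`. -/
def bd (Ω : Set (Euc n)) (x : Euc n) : ℝ := Metric.infDist x (frontier Ω)

/-- `σ`: the `d`-dimensional Hausdorff measure on `ℝⁿ`. -/
def hm (n : ℕ) (d : ℝ) : Measure (Euc n) := μH[d]

/-- `Γ ⊆ ℝⁿ` is `d`-Ahlfors regular with constant `A`: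
`(1/A) rᵈ ≤ σ(B(ξ,r) ∩ Γ) ≤ A rᵈ` for all `ξ ∈ Γ` and `0 < r ≤ diam Γ`. -/
def AhlforsRegular (d A : ℝ) (Γ : Set (Euc n)) : Prop :=
  Γ.Nonempty ∧ 0 < A ∧
    ∀ ξ ∈ Γ, ∀ r : ℝ, 0 < r → ENNReal.ofReal r ≤ EMetric.diam Γ →
      ENNReal.ofReal (r ^ d / A) ≤ hm n d (Metric.ball ξ r ∩ Γ) ∧
        hm n d (Metric.ball ξ r ∩ Γ) ≤ ENNReal.ofReal (A * r ^ d)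

/-- A `λ`-carrot path from `x ∈ ∂Ω` to `y ∈ Ω`: a rectifiable curve, parameterized by
arc length (hence `1`-Lipschitz), from `x` to `y`, staying in `Ω ∪ {x}`, with
`δ(ζ(t)) ≥ λ t`. -/
def IsCarrotPath (Ω : Set (Euc n)) (lam : ℝ) (x y : Euc n) : Prop :=
  ∃ (T : ℝ) (ζ : ℝ → Euc n), 0 ≤ T ∧ ζ 0 = x ∧ ζ T = y ∧
    LipschitzOnWith 1 ζ (Set.Icc 0 T) ∧
    (∀ t ∈ Set.Icc (0 : ℝ) T, ζ t ∈ Ω ∪ {x}) ∧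
    (∀ t ∈ Set.Icc (0 : ℝ) T, lam * t ≤ bd Ω (ζ t))

/-- `y ∈ Ω` is a `(θ,λ,N)`-weak local John point. -/
def IsWLJPoint (Ω : Set (Euc n)) (d θ lam N : ℝ) (y : Euc n) : Prop :=
  ∃ F : Set (Euc n), MeasurableSet F ∧
    F ⊆ Metric.ball y (N * bd Ω y) ∩ frontier Ω ∧
    ENNReal.ofReal θ * hm n d (Metric.ball y (N * bd Ω y) ∩ frontier Ω) ≤ hm n d F ∧
    ∀ x ∈ F, IsCarrotPath Ω lam x y

/-- The weak local John condition with specified parameters. -/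
def WeakLocalJohnWith (Ω : Set (Euc n)) (d θ lam N : ℝ) : Prop :=
  0 < θ ∧ θ ≤ 1 ∧ 0 < lam ∧ lam ≤ 1 ∧ 2 ≤ N ∧ ∀ y ∈ Ω, IsWLJPoint Ω d θ lam N y

/-- `Ω` is a weak local John domain. -/
def WeakLocalJohn (Ω : Set (Euc n)) (d : ℝ) : Prop :=
  ∃ θ lam N : ℝ, WeakLocalJohnWith Ω d θ lam N

/-- The interior corkscrew condition. -/
def InteriorCorkscrew (Ω : Set (Euc n)) : Prop :=
  ∃ ε : ℝ, 0 < ε ∧ ε < 1 ∧ ∀ x ∈ frontier Ω, ∀ r : ℝ, 0 < r →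
    ENNReal.ofReal r < EMetric.diam Ω →
    ∃ z : Euc n, z ∈ Metric.ball x r ∧ Metric.ball z (ε * r) ⊆ Ω

/-- The Harnack chain condition. -/
def HarnackChainCond (Ω : Set (Euc n)) : Prop :=
  ∃ (M m : ℝ) (Nf : ℝ → ℕ), 1 ≤ M ∧ 0 < m ∧ m < 1 ∧
    ∀ x ∈ Ω, ∀ y ∈ Ω,
      ∃ (N : ℕ) (c : Fin (N + 1) → Euc n) (r : Fin (N + 1) → ℝ),
        N ≤ Nf (dist x y / min (bd Ω x) (bd Ω y)) ∧
        x ∈ Metric.ball (c 0) (r 0) ∧ y ∈ Metric.ball (c (Fin.last N)) (r (Fin.last N)) ∧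
        (∀ i : Fin N,
          (Metric.ball (c i.castSucc) (r i.castSucc) ∩ Metric.ball (c i.succ) (r i.succ)).Nonempty) ∧
        ∀ i : Fin (N + 1), 0 < r i ∧ Metric.ball (c i) (r i) ⊆ Ω ∧
          m * (2 * r i) ≤ bd Ω (c i) - r i ∧ bd Ω (c i) - r i ≤ M * (2 * r i)

/-- The weighted ellipticity conditions
`λ δ(x)^{d+1-n} |ξ|² ≤ ξ·A(x)ξ` and `|η·A(x)ξ| ≤ Λ δ(x)^{d+1-n} |ξ||η|` on `Ω`. -/
def WeaklyElliptic (Ω : Set (Euc n)) (d lam Lam : ℝ)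
    (A : Euc n → Euc n →L[ℝ] Euc n) : Prop :=
  0 < lam ∧ lam ≤ Lam ∧ (∀ v : Euc n, Measurable fun x => A x v) ∧
    ∀ x ∈ Ω, ∀ ξ η : Euc n,
      lam * bd Ω x ^ (d + 1 - (n : ℝ)) * ‖ξ‖ ^ 2 ≤ ⟪ξ, A x ξ⟫ ∧
      |⟪η, A x ξ⟫| ≤ Lam * bd Ω x ^ (d + 1 - (n : ℝ)) * ‖ξ‖ * ‖η‖

/-- A test function on the open set `Ψ`: smooth, compactly supported, support inside `Ψ`. -/
def IsTestOn (Ψ : Set (Euc n)) (φ : Euc n → ℝ) : Prop :=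
  ContDiff ℝ (⊤ : ℕ∞) φ ∧ HasCompactSupport φ ∧ tsupport φ ⊆ Ψ

/-- `g` is the weak gradient of `u` on `Ψ`:
`∫_Ψ u ∂ᵥφ = −∫_Ψ ⟪g,v⟫ φ` for all test functions `φ` and directions `v`. -/
def HasWeakGradOn (u : Euc n → ℝ) (g : Euc n → Euc n) (Ψ : Set (Euc n)) : Prop :=
  LocallyIntegrableOn u Ψ volume ∧ LocallyIntegrableOn g Ψ volume ∧
    ∀ φ : Euc n → ℝ, IsTestOn Ψ φ → ∀ v : Euc n,
      (∫ x in Ψ, u x * fderiv ℝ φ x v) = -∫ x in Ψ, ⟪g x, v⟫ * φ x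

/-- Weak formulation of `− div A ∇u = − div H` in `Ψ`, where `g` is the weak gradient
of `u`. -/
def WeakSolOn (Ψ : Set (Euc n)) (A : Euc n → Euc n →L[ℝ] Euc n)
    (u : Euc n → ℝ) (g H : Euc n → Euc n) : Prop :=
  HasWeakGradOn u g Ψ ∧ LocallyIntegrableOn H Ψ volume ∧
    ∀ φ : Euc n → ℝ, IsTestOn Ψ φ →
      (∫ x in Ψ, ⟪gradient φ x, A x (g x)⟫) = ∫ x in Ψ, ⟪gradient φ x, H x⟫

/-- `Tr u(ξ) = 0` in the averaged sense: `r^{-n} ∫_{B(ξ,r)∩Ω} |u| → 0` as `r → 0⁺`. -/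
def TrZeroAt (Ω : Set (Euc n)) (u : Euc n → ℝ) (ξ : Euc n) : Prop :=
  Tendsto (fun r : ℝ => (1 / r ^ n) * ∫ x in Metric.ball ξ r ∩ Ω, |u x|)
    (𝓝[>] 0) (𝓝 0)

/-- The Whitney average `W_{c,β} f (y) = (⨍_{B(y, c δ(y))} |f|^β)^{1/β}`
(essential supremum if `β = ∞`), as an extended nonnegative real. -/
def wAvg (Ω : Set (Euc n)) (c : ℝ) (β : ℝ≥0∞) {F : Type*} [NormedAddCommGroup F]
    (f : Euc n → F) (y : Euc n) : ℝ≥0∞ :=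
  eLpNorm f β
    ((volume (Metric.ball y (c * bd Ω y)))⁻¹ • volume.restrict (Metric.ball y (c * bd Ω y)))

/-- The weighted averaged norm `‖f‖_{L^p_{av,c,β,s}(Ψ;Ω)}`:
`(∫_Ψ (W_{c,β}f)^p δ^{d-n+p-ps})^{1/p}`, `sup_Ψ (W_{c,β}f) δ^{1-s}` if `p = ∞`. -/
def avNormOn (Ω Ψ : Set (Euc n)) (d c : ℝ) (β p : ℝ≥0∞) (s : ℝ)
    {F : Type*} [NormedAddCommGroup F] (f : Euc n → F) : ℝ≥0∞ :=
  if p = ⊤ then ⨆ y ∈ Ψ, wAvg Ω c β f y * ENNReal.ofReal (bd Ω y) ^ (1 - s)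
  else (∫⁻ y in Ψ, wAvg Ω c β f y ^ p.toReal *
      ENNReal.ofReal (bd Ω y) ^ (d - n + p.toReal - p.toReal * s)) ^ (1 / p.toReal)

/-- The weighted averaged norm `‖f‖_{L^p_{av,c,β,s}(Ω)}`. -/
def avNorm (Ω : Set (Euc n)) (d c : ℝ) (β p : ℝ≥0∞) (s : ℝ)
    {F : Type*} [NormedAddCommGroup F] (f : Euc n → F) : ℝ≥0∞ :=
  avNormOn Ω Ω d c β p s f

/-- `f ∈ L^β_loc(Ω)`. -/
def MemLLoc (Ω : Set (Euc n)) (β : ℝ≥0∞) {F : Type*} [NormedAddCommGroup F]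
    (f : Euc n → F) : Prop :=
  AEStronglyMeasurable f (volume.restrict Ω) ∧
    ∀ K : Set (Euc n), K ⊆ Ω → IsCompact K → eLpNorm f β (volume.restrict K) < ⊤

/-- The nontangential cone `γ_a(ξ) = {x ∈ Ω : |x − ξ| < (1+a) δ(x)}`. -/
def ntCone (Ω : Set (Euc n)) (a : ℝ) (ξ : Euc n) : Set (Euc n) :=
  {x | x ∈ Ω ∧ dist x ξ < (1 + a) * bd Ω x}

/-- The nontangential maximal function `N_a f (ξ) = esssup_{γ_a(ξ)} |f|`. -/
def ntMax (Ω : Set (Euc n)) (a : ℝ) {F : Type*} [NormedAddCommGroup F]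
    (f : Euc n → F) (ξ : Euc n) : ℝ≥0∞ :=
  essSup (fun x => (‖f x‖₊ : ℝ≥0∞)) (volume.restrict (ntCone Ω a ξ))

/-- The `L^q` norm of an `ℝ≥0∞`-valued function. -/
def lqNormE (q : ℝ≥0∞) {α : Type*} [MeasurableSpace α] (μ : Measure α)
    (f : α → ℝ≥0∞) : ℝ≥0∞ :=
  if q = ⊤ then essSup f μ else (∫⁻ x, f x ^ q.toReal ∂μ) ^ (1 / q.toReal)

/-- `Tr_{a,c} u (x) = U`: `x` is in the closure of its nontangential cone, and the
Whitney averages of `|u − U|` tend to `0` nontangentially. -/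
def HasNTTrace (Ω : Set (Euc n)) (a c : ℝ) (u : Euc n → ℝ) (x : Euc n) (U : ℝ) : Prop :=
  x ∈ closure (ntCone Ω a x) ∧
    Tendsto (fun y => wAvg Ω c 1 (fun z => u z - U) y) (𝓝[ntCone Ω a x] x) (𝓝 0)

/-! `N_a F` exceeds `t` exactly on the union of the balls `B(x, (1 + a) δ(x))`, where `x` runs over
the points of `Ω` near which `{|F| > t}` has positive measure: cones are open, so only such `x`
matter, and they do not depend on `a`. If `z ∈ ∂Ω` is a point nearest to `x`, then
`B(z, a δ(x)) ⊆ B(x, (1 + a) δ(x))`, while `B(x, (1 + b) δ(x)) ⊆ B(z, (2 + b) δ(x))`. So the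
level set of `N_b F` is covered by a fixed dilation of balls contained in the level set of `N_a F`,
and the Vitali covering lemma bounds the loss by a doubling constant of `σ` on `∂Ω`. When `∂Ω` is
bounded, the radii must first be truncated at its diameter, as regularity says nothing beyond it.
The `L^q` inequality follows from the layer cake formula. -/

section TruncatedRadius

variable {X : Type*} [PseudoMetricSpace X] {Γ : Set X} {r : ℝ}

/-- The radius `r` truncated at the diameter of `Γ`, the largest scale at which Ahlfors regularity
of `Γ` gives information; it is `r` itself when `0 ≤ r` and `Γ` is unbounded. -/
def truncRadius (Γ : Set X) (r : ℝ) : ℝ := (min (ENNReal.ofReal r) (ediam Γ)).toReal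

theorem ofReal_truncRadius :
    ENNReal.ofReal (truncRadius Γ r) = min (ENNReal.ofReal r) (ediam Γ) :=
  ENNReal.ofReal_toReal (min_lt_of_left_lt ENNReal.ofReal_lt_top).ne

theorem ofReal_truncRadius_le_ediam : ENNReal.ofReal (truncRadius Γ r) ≤ ediam Γ :=
  ofReal_truncRadius.trans_le (min_le_right _ _)

theorem truncRadius_pos (hr : 0 < r) (hΓ : 0 < ediam Γ) : 0 < truncRadius Γ r := by
  rw [← ENNReal.ofReal_pos, ofReal_truncRadius]
  exact lt_min (ENNReal.ofReal_pos.2 hr) hΓ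

theorem truncRadius_le (hr : 0 ≤ r) : truncRadius Γ r ≤ r :=
  (ENNReal.ofReal_le_ofReal_iff hr).1 (ofReal_truncRadius.trans_le (min_le_left _ _))

theorem dist_le_mul_truncRadius {c : ℝ} {x y : X} (hc : 1 ≤ c) (hx : x ∈ Γ) (hy : y ∈ Γ)
    (h : dist x y ≤ c * r) : dist x y ≤ c * truncRadius Γ r := by
  have hc₀ : 0 ≤ c := zero_le_one.trans hc
  have htrunc : 0 ≤ truncRadius Γ r := ENNReal.toReal_nonneg
  rw [← ENNReal.ofReal_le_ofReal_iff (mul_nonneg hc₀ htrunc), ENNReal.ofReal_mul hc₀,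
    ofReal_truncRadius, mul_min, ← ENNReal.ofReal_mul hc₀]
  refine le_min (ENNReal.ofReal_le_ofReal h) ?_
  calc ENNReal.ofReal (dist x y) ≤ ediam Γ := edist_dist x y ▸ edist_le_ediam_of_mem hx hy
    _ ≤ ENNReal.ofReal c * ediam Γ := le_mul_of_one_le_left' (ENNReal.one_le_ofReal.2 hc)

end TruncatedRadius

section Covering

theorem exists_finset_closedBall_subset_biUnion_ball (E : Type*) [SeminormedAddCommGroup E]
    [NormedSpace ℝ E] [ProperSpace E] :
    ∃ t : Finset E, ∀ (x : E) {r : ℝ}, 0 < r →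
      closedBall x r ⊆ ⋃ z ∈ t, ball (x + r • z) (r / 2) := by
  obtain ⟨t, -, ht_fin, ht⟩ :=
    (isCompact_closedBall (0 : E) 1).finite_cover_balls (e := 1 / 2) (by norm_num)
  lift t to Finset E using ht_fin
  refine ⟨t, fun x r hr y hy => ?_⟩
  have hy_scaled : r⁻¹ • (y - x) ∈ closedBall (0 : E) 1 := by
    rw [mem_closedBall_zero_iff, norm_smul, norm_inv, Real.norm_of_nonneg hr.le,
      inv_mul_le_one₀ hr]
    exact mem_closedBall_iff_norm.1 hy
  obtain ⟨z, hz, hyz⟩ := mem_iUnion₂.1 (ht hy_scaled)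
  refine mem_iUnion₂.2 ⟨z, hz, ?_⟩
  have hsub : y - (x + r • z) = r • (r⁻¹ • (y - x) - z) := by
    rw [smul_sub, smul_inv_smul₀ hr.ne', sub_sub]
  rw [mem_ball_iff_norm] at hyz ⊢
  calc ‖y - (x + r • z)‖ = r * ‖r⁻¹ • (y - x) - z‖ := by
        rw [hsub, norm_smul, Real.norm_of_nonneg hr.le]
    _ < r * (1 / 2) := by gcongr
    _ = r / 2 := by ring

variable {X ι : Type*} [PseudoMetricSpace X] [MeasurableSpace X] {μ : Measure X}

theorem measure_le_card_mul_of_subset_biUnion_ball {s : Set X} {t : Finset ι} {c : ι → X} {r : ℝ}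
    {M : ℝ≥0∞} (hs : s ⊆ ⋃ i ∈ t, ball (c i) (r / 2)) (hM : ∀ x ∈ s, μ (ball x r ∩ s) ≤ M) :
    μ s ≤ t.card * M := by
  have hpiece : ∀ i ∈ t, μ (ball (c i) (r / 2) ∩ s) ≤ M := fun i _ => by
    obtain hempty | ⟨x, hx, hxs⟩ := (ball (c i) (r / 2) ∩ s).eq_empty_or_nonempty
    · simp [hempty]
    · refine (measure_mono (inter_subset_inter_left _ (ball_subset_ball' ?_))).trans (hM x hxs)
      linarith [mem_ball'.1 hx]
  calc μ s ≤ μ (⋃ i ∈ t, ball (c i) (r / 2) ∩ s) := by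
        rw [← iUnion₂_inter]
        exact measure_mono (subset_inter hs Subset.rfl)
    _ ≤ ∑ i ∈ t, μ (ball (c i) (r / 2) ∩ s) := measure_biUnion_finset_le _ _
    _ ≤ t.card * M := by simpa using Finset.sum_le_card_nsmul _ _ _ hpiece

variable [SecondCountableTopology X] [OpensMeasurableSpace X] {V : Set ι} {z : ι → X} {ρ : ι → ℝ}
  {K : ℝ} {C : ℝ≥0∞}

theorem measure_biUnion_closedBall_mul_le_of_le (hK : 0 ≤ K) (hρ : ∀ i ∈ V, 0 < ρ i)
    (hC : ∀ i ∈ V, μ (ball (z i) ((3 + 2 * K) * ρ i)) ≤ C * μ (ball (z i) (ρ i)))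
    {R : ℝ} (hR : ∀ i ∈ V, ρ i ≤ R) :
    μ (⋃ i ∈ V, closedBall (z i) (K * ρ i)) ≤ C * μ (⋃ i ∈ V, ball (z i) (ρ i)) := by
  obtain ⟨u, huV, hu_disj, hu⟩ := Vitali.exists_disjoint_subfamily_covering_enlargement
    (fun i => ball (z i) (ρ i)) V ρ 2 one_lt_two (fun i hi => (hρ i hi).le) R hR
    (fun i hi => nonempty_ball.2 (hρ i hi))
  have hu_countable : u.Countable := hu_disj.countable_of_isOpen (fun _ _ => isOpen_ball)
    (fun i hi => nonempty_ball.2 (hρ i (huV hi)))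
  have hcover : ⋃ i ∈ V, closedBall (z i) (K * ρ i) ⊆
      ⋃ j ∈ u, ball (z j) ((3 + 2 * K) * ρ j) := by
    refine iUnion₂_subset fun i hi x hxi => ?_
    obtain ⟨j, hj, ⟨y, hyi, hyj⟩, hij⟩ := hu i hi
    refine mem_iUnion₂.2 ⟨j, hj, mem_ball.2 ?_⟩
    calc dist x (z j) ≤ dist x (z i) + dist (z i) y + dist y (z j) := dist_triangle4 _ _ _ _
      _ < K * ρ i + ρ i + ρ j :=
        add_lt_add (add_lt_add_of_le_of_lt (mem_closedBall.1 hxi) (mem_ball'.1 hyi))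
          (mem_ball.1 hyj)
      _ ≤ K * (2 * ρ j) + 2 * ρ j + ρ j := by gcongr
      _ = (3 + 2 * K) * ρ j := by ring
  calc μ (⋃ i ∈ V, closedBall (z i) (K * ρ i))
      ≤ ∑' j : u, μ (ball (z j) ((3 + 2 * K) * ρ j)) :=
        (measure_mono hcover).trans (measure_biUnion_le μ hu_countable _)
    _ ≤ ∑' j : u, C * μ (ball (z j) (ρ j)) :=
        ENNReal.tsum_le_tsum fun j => hC j (huV j.2)
    _ = C * μ (⋃ j ∈ u, ball (z j) (ρ j)) := by
        rw [ENNReal.tsum_mul_left,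
          measure_biUnion hu_countable hu_disj fun _ _ => measurableSet_ball]
    _ ≤ C * μ (⋃ i ∈ V, ball (z i) (ρ i)) := by
        gcongr C * μ ?_
        exact biUnion_subset_biUnion_left huV

theorem measure_biUnion_closedBall_mul_le (hK : 0 ≤ K) (hρ : ∀ i ∈ V, 0 < ρ i)
    (hC : ∀ i ∈ V, μ (ball (z i) ((3 + 2 * K) * ρ i)) ≤ C * μ (ball (z i) (ρ i))) :
    μ (⋃ i ∈ V, closedBall (z i) (K * ρ i)) ≤ C * μ (⋃ i ∈ V, ball (z i) (ρ i)) := by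
  -- The Vitali covering lemma needs bounded radii, so `V` is exhausted by `{i ∈ V | ρ i ≤ k}`.
  let W : ℕ → Set ι := fun k => {i ∈ V | ρ i ≤ k}
  have hW_mono : Monotone fun k => ⋃ i ∈ W k, closedBall (z i) (K * ρ i) := fun k l hkl =>
    biUnion_subset_biUnion_left fun i hi => ⟨hi.1, hi.2.trans (Nat.cast_le.2 hkl)⟩
  have hW_iUnion : ⋃ i ∈ V, closedBall (z i) (K * ρ i) ⊆
      ⋃ k, ⋃ i ∈ W k, closedBall (z i) (K * ρ i) := iUnion₂_subset fun i hi x hx =>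
    have ⟨k, hk⟩ := exists_nat_ge (ρ i)
    mem_iUnion.2 ⟨k, mem_iUnion₂.2 ⟨i, ⟨hi, hk⟩, hx⟩⟩
  refine (measure_mono hW_iUnion).trans (hW_mono.measure_iUnion.trans_le (iSup_le fun k => ?_))
  calc μ (⋃ i ∈ W k, closedBall (z i) (K * ρ i)) ≤ C * μ (⋃ i ∈ W k, ball (z i) (ρ i)) :=
        measure_biUnion_closedBall_mul_le_of_le hK (fun i hi => hρ i hi.1)
          (fun i hi => hC i hi.1) fun i hi => hi.2
    _ ≤ C * μ (⋃ i ∈ V, ball (z i) (ρ i)) := by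
        gcongr C * μ ?_
        exact biUnion_subset_biUnion_left fun i hi => hi.1

end Covering

namespace AhlforsRegular

theorem exists_hm_ball_inter_le (n : ℕ) :
    ∃ N : ℕ, ∀ {d A : ℝ} {Γ : Set (Euc n)}, 0 ≤ d → AhlforsRegular d A Γ → 0 < ediam Γ →
      ∀ ξ ∈ Γ, ∀ r : ℝ, 0 < r → hm n d (ball ξ r ∩ Γ) ≤ N * ENNReal.ofReal (A * r ^ d) := by
  obtain ⟨t, ht⟩ := exists_finset_closedBall_subset_biUnion_ball (Euc n)
  refine ⟨t.card, fun {d A Γ} hd hΓ hdiam ξ hξ r hr => ?_⟩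
  obtain ⟨-, hA, hreg⟩ := hΓ
  set ρ := truncRadius Γ r
  have hρ : 0 < ρ := truncRadius_pos hr hdiam
  have hsub : ball ξ r ∩ Γ ⊆ closedBall ξ ρ := fun η ⟨hηr, hη⟩ => by
    simpa using dist_le_mul_truncRadius le_rfl hη hξ (by simpa using (mem_ball.1 hηr).le)
  refine measure_le_card_mul_of_subset_biUnion_ball (hsub.trans (ht ξ hρ)) fun η hη => ?_
  calc hm n d (ball η ρ ∩ (ball ξ r ∩ Γ)) ≤ hm n d (ball η ρ ∩ Γ) := by gcongr; simp
    _ ≤ ENNReal.ofReal (A * ρ ^ d) := (hreg η hη.2 ρ hρ ofReal_truncRadius_le_ediam).2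
    _ ≤ ENNReal.ofReal (A * r ^ d) := by gcongr; exact truncRadius_le hr.le

theorem exists_hm_restrict_ball_mul_le (n : ℕ) {d : ℝ} (A : ℝ) (hd : 0 ≤ d) {c : ℝ} (hc : 0 < c) :
    ∃ C : ℝ≥0, ∀ {Γ : Set (Euc n)}, AhlforsRegular d A Γ → ∀ ξ ∈ Γ, ∀ r : ℝ, 0 < r →
      ENNReal.ofReal r ≤ ediam Γ →
        (hm n d).restrict Γ (ball ξ (c * r)) ≤ C * (hm n d).restrict Γ (ball ξ r) := by
  obtain ⟨N, hN⟩ := exists_hm_ball_inter_le n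
  refine ⟨N * (A ^ 2 * c ^ d).toNNReal, fun {Γ} hΓ ξ hξ r hr hrΓ => ?_⟩
  obtain ⟨-, hA, hreg⟩ := id hΓ
  have hconst : A * (c * r) ^ d = A ^ 2 * c ^ d * (r ^ d / A) := by
    rw [Real.mul_rpow hc.le hr.le]
    field_simp
  rw [Measure.restrict_apply measurableSet_ball, Measure.restrict_apply measurableSet_ball]
  calc hm n d (ball ξ (c * r) ∩ Γ) ≤ N * ENNReal.ofReal (A * (c * r) ^ d) :=
        hN hd hΓ ((ENNReal.ofReal_pos.2 hr).trans_le hrΓ) ξ hξ _ (by positivity)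
    _ = N * ENNReal.ofReal (A ^ 2 * c ^ d) * ENNReal.ofReal (r ^ d / A) := by
        rw [hconst, ENNReal.ofReal_mul (by positivity), mul_assoc]
    _ ≤ N * ENNReal.ofReal (A ^ 2 * c ^ d) * hm n d (ball ξ r ∩ Γ) := by
        gcongr
        exact (hreg ξ hξ r hr hrΓ).1
    _ = _ := by rw [ENNReal.coe_mul, ENNReal.coe_natCast, ENNReal.ofReal]

end AhlforsRegular

section EssSup

variable {X : Type*} [MeasurableSpace X] {μ : Measure X}

theorem lt_essSup_iff {f : X → ℝ≥0∞} {t : ℝ≥0∞} : t < essSup f μ ↔ μ {x | t < f x} ≠ 0 := by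
  rw [← not_iff_not, not_lt, not_not]
  refine ⟨fun h => measure_mono_null (fun x hx => h.trans_lt hx) (meas_essSup_lt (f := f)),
    fun h => ?_⟩
  exact essSup_le_of_ae_le t (ae_iff.2 (by simpa only [not_le] using h))

theorem lt_essSup_restrict_iff_of_isOpen [TopologicalSpace X] [HereditarilyLindelofSpace X]
    [OpensMeasurableSpace X] {U : Set X} (hU : IsOpen U) {f : X → ℝ≥0∞} {t : ℝ≥0∞} :
    t < essSup f (μ.restrict U) ↔ (U ∩ (μ.restrict {x | t < f x}).support).Nonempty := by
  have hswap : μ.restrict U {x | t < f x} = μ.restrict {x | t < f x} U := by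
    rw [Measure.restrict_apply' hU.measurableSet, Measure.restrict_apply hU.measurableSet,
      inter_comm]
  rw [lt_essSup_iff, hswap, ← pos_iff_ne_zero]
  refine ⟨Measure.nonempty_inter_support_of_pos, fun ⟨x, hxU, hx⟩ => ?_⟩
  exact (Measure.mem_support_iff_forall x).1 hx U (hU.mem_nhds hxU)

end EssSup

section BoundaryDistance

variable {Ω : Set (Euc n)} {x z : Euc n} {a b : ℝ}

theorem bd_pos (hΩ : IsOpen Ω) (hne : (frontier Ω).Nonempty) (hx : x ∈ Ω) : 0 < bd Ω x :=
  (isClosed_frontier.notMem_iff_infDist_pos hne).1 fun hx' => hΩ.inter_frontier_eq.subset ⟨hx, hx'⟩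

theorem ball_subset_ball_bd (hz : bd Ω x = dist x z) {r : ℝ} (hr : r ≤ a * bd Ω x) :
    ball z r ⊆ ball x ((1 + a) * bd Ω x) :=
  ball_subset_ball' (by rw [dist_comm, ← hz]; linarith)

theorem ball_bd_inter_frontier_subset_closedBall (ha : 0 < a) (hz_mem : z ∈ frontier Ω)
    (hz : bd Ω x = dist x z) :
    ball x ((1 + b) * bd Ω x) ∩ frontier Ω ⊆
      closedBall z (max 1 ((2 + b) / a) * truncRadius (frontier Ω) (a * bd Ω x)) := by
  intro ξ ⟨hξx, hξ⟩
  refine dist_le_mul_truncRadius (le_max_left _ _) hξ hz_mem ?_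
  have hbd : 0 ≤ bd Ω x := infDist_nonneg
  calc dist ξ z ≤ dist ξ x + dist x z := dist_triangle _ _ _
    _ ≤ (1 + b) * bd Ω x + bd Ω x := add_le_add (mem_ball.1 hξx).le hz.ge
    _ = (2 + b) / a * (a * bd Ω x) := by field_simp; ring
    _ ≤ max 1 ((2 + b) / a) * (a * bd Ω x) := by gcongr; exact le_max_right _ _

end BoundaryDistance

section NontangentialMaximalFunction

variable {E : Type*} [NormedAddCommGroup E] {Ω : Set (Euc n)} {F : Euc n → E} {a b : ℝ}

theorem ntCone_mono (hab : a ≤ b) (ξ : Euc n) : ntCone Ω a ξ ⊆ ntCone Ω b ξ := fun x hx =>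
  have hbd : 0 ≤ bd Ω x := infDist_nonneg
  ⟨hx.1, hx.2.trans_le (by gcongr)⟩

theorem isOpen_ntCone (hΩ : IsOpen Ω) (a : ℝ) (ξ : Euc n) : IsOpen (ntCone Ω a ξ) :=
  hΩ.inter (isOpen_lt (by fun_prop) (continuous_const.mul (continuous_infDist_pt _)))

theorem ntCone_eq_of_subsingleton_frontier (hΩ : IsOpen Ω) (hsub : (frontier Ω).Subsingleton)
    (ha : 0 < a) {ξ : Euc n} (hξ : ξ ∈ frontier Ω) : ntCone Ω a ξ = Ω := by
  refine Subset.antisymm (fun x hx => hx.1) fun x hx => ⟨hx, ?_⟩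
  have hbd : dist x ξ = bd Ω x := by
    rw [bd, hsub.eq_singleton_of_mem hξ, infDist_singleton]
  rw [hbd]
  linarith [mul_pos ha (bd_pos hΩ ⟨ξ, hξ⟩ hx)]

theorem ntMax_mono_of_ntCone_subset {ξ : Euc n} (h : ntCone Ω a ξ ⊆ ntCone Ω b ξ) :
    ntMax Ω a F ξ ≤ ntMax Ω b F ξ :=
  essSup_mono_measure' (Measure.restrict_mono h le_rfl)

/-- The points of `Ω` all of whose neighbourhoods meet `{‖F‖ > t}` in positive measure. They govern
the level sets `{N_a F > t}` for all apertures `a` at once. -/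
def essLevelSet (Ω : Set (Euc n)) (F : Euc n → E) (t : ℝ≥0∞) : Set (Euc n) :=
  Ω ∩ (volume.restrict {x | t < ‖F x‖₊}).support

theorem setOf_lt_ntMax (hΩ : IsOpen Ω) (F : Euc n → E) (a : ℝ) (t : ℝ≥0∞) :
    {ξ | t < ntMax Ω a F ξ} = ⋃ x ∈ essLevelSet Ω F t, ball x ((1 + a) * bd Ω x) := by
  ext ξ
  rw [mem_ofPred_eq, ntMax, lt_essSup_restrict_iff_of_isOpen (isOpen_ntCone hΩ a ξ), mem_iUnion₂]
  constructor
  · rintro ⟨x, ⟨hx, hxξ⟩, hxF⟩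
    exact ⟨x, ⟨hx, hxF⟩, mem_ball'.2 hxξ⟩
  · rintro ⟨x, ⟨hx, hxF⟩, hxξ⟩
    exact ⟨x, ⟨hx, mem_ball'.1 hxξ⟩, hxF⟩

theorem measurable_ntMax (hΩ : IsOpen Ω) (F : Euc n → E) (a : ℝ) : Measurable (ntMax Ω a F) :=
  measurable_of_Ioi fun t => by
    have hopen : IsOpen {ξ | t < ntMax Ω a F ξ} := by
      rw [setOf_lt_ntMax hΩ]
      exact isOpen_biUnion fun _ _ => isOpen_ball
    exact hopen.measurableSet

theorem measure_restrict_lt_ntMax_le_of_subsingleton (μ : Measure (Euc n)) (hΩ : IsOpen Ω)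
    (hsub : (frontier Ω).Subsingleton) (ha : 0 < a) (t : ℝ≥0∞) :
    μ.restrict (frontier Ω) {ξ | t < ntMax Ω b F ξ} ≤
      μ.restrict (frontier Ω) {ξ | t < ntMax Ω a F ξ} := by
  refine measure_mono_ae ?_
  filter_upwards [ae_restrict_mem measurableSet_frontier] with ξ hξ hbt
  refine lt_of_lt_of_le hbt (ntMax_mono_of_ntCone_subset ?_)
  rw [ntCone_eq_of_subsingleton_frontier hΩ hsub ha hξ]
  exact fun x hx => hx.1

theorem measure_restrict_lt_ntMax_le_of_doubling {μ : Measure (Euc n)} {C : ℝ≥0∞} (hΩ : IsOpen Ω)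
    (hdiam : 0 < ediam (frontier Ω)) (ha : 0 < a)
    (hC : ∀ ξ ∈ frontier Ω, ∀ r : ℝ, 0 < r → ENNReal.ofReal r ≤ ediam (frontier Ω) →
      μ.restrict (frontier Ω) (ball ξ ((3 + 2 * max 1 ((2 + b) / a)) * r)) ≤
        C * μ.restrict (frontier Ω) (ball ξ r)) (t : ℝ≥0∞) :
    μ.restrict (frontier Ω) {ξ | t < ntMax Ω b F ξ} ≤
      C * μ.restrict (frontier Ω) {ξ | t < ntMax Ω a F ξ} := by
  have hne : (frontier Ω).Nonempty := (ediam_pos_iff.1 hdiam).nonempty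
  choose z hz_mem hz using fun x => isClosed_frontier.exists_infDist_eq_dist hne x
  let ρ : Euc n → ℝ := fun x => truncRadius (frontier Ω) (a * bd Ω x)
  have hρ : ∀ x ∈ essLevelSet Ω F t, 0 < ρ x := fun x hx =>
    truncRadius_pos (mul_pos ha (bd_pos hΩ hne hx.1)) hdiam
  rw [setOf_lt_ntMax hΩ, setOf_lt_ntMax hΩ]
  calc μ.restrict (frontier Ω) (⋃ x ∈ essLevelSet Ω F t, ball x ((1 + b) * bd Ω x))
      ≤ μ.restrict (frontier Ω)
          (⋃ x ∈ essLevelSet Ω F t, closedBall (z x) (max 1 ((2 + b) / a) * ρ x)) := by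
        refine measure_mono_ae ?_
        filter_upwards [ae_restrict_mem measurableSet_frontier] with ξ hξ hξ_mem
        obtain ⟨x, hx, hξx⟩ := mem_iUnion₂.1 hξ_mem
        exact mem_iUnion₂.2
          ⟨x, hx, ball_bd_inter_frontier_subset_closedBall ha (hz_mem x) (hz x) ⟨hξx, hξ⟩⟩
    _ ≤ C * μ.restrict (frontier Ω) (⋃ x ∈ essLevelSet Ω F t, ball (z x) (ρ x)) :=
        measure_biUnion_closedBall_mul_le (by positivity) hρ fun x hx =>
          hC (z x) (hz_mem x) (ρ x) (hρ x hx) ofReal_truncRadius_le_ediam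
    _ ≤ C * μ.restrict (frontier Ω) (⋃ x ∈ essLevelSet Ω F t, ball x ((1 + a) * bd Ω x)) := by
        gcongr with x
        exact ball_subset_ball_bd (hz x) (truncRadius_le (mul_nonneg ha.le infDist_nonneg))

theorem exists_hm_restrict_lt_ntMax_le (n : ℕ) {d a : ℝ} (A b : ℝ) (hd : 0 ≤ d) (ha : 0 < a) :
    ∃ C : ℝ≥0, 0 < C ∧ ∀ {Ω : Set (Euc n)}, IsOpen Ω → AhlforsRegular d A (frontier Ω) →
      ∀ (F : Euc n → E) (t : ℝ≥0∞),
        (hm n d).restrict (frontier Ω) {ξ | t < ntMax Ω b F ξ} ≤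
          C * (hm n d).restrict (frontier Ω) {ξ | t < ntMax Ω a F ξ} := by
  obtain ⟨C, hC⟩ := AhlforsRegular.exists_hm_restrict_ball_mul_le n A hd
    (c := 3 + 2 * max 1 ((2 + b) / a)) (by positivity)
  refine ⟨max 1 C, by positivity, fun {Ω} hΩ hreg F t => ?_⟩
  obtain hdiam | hdiam := eq_zero_or_pos (ediam (frontier Ω))
  · refine (measure_restrict_lt_ntMax_le_of_subsingleton _ hΩ (ediam_eq_zero_iff.1 hdiam) ha
      t).trans (le_mul_of_one_le_left' ?_)
    exact_mod_cast le_max_left 1 C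
  · refine (measure_restrict_lt_ntMax_le_of_doubling hΩ hdiam ha (hC hreg) t).trans ?_
    gcongr
    exact le_max_right _ _

end NontangentialMaximalFunction

section DistributionFunction

variable {α : Type*} [MeasurableSpace α] {μ : Measure α} {f g : α → ℝ≥0∞} {C : ℝ≥0∞} {q : ℝ≥0∞}

theorem lintegral_eq_lintegral_meas_ofReal_lt (hf : AEMeasurable f μ) :
    ∫⁻ x, f x ∂μ = ∫⁻ s in Ioi (0 : ℝ), μ {x | ENNReal.ofReal s < f x} := by
  by_cases hfin : ∀ᵐ x ∂μ, f x ≠ ⊤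
  · calc ∫⁻ x, f x ∂μ = ∫⁻ x, ENNReal.ofReal (f x).toReal ∂μ :=
          lintegral_congr_ae (hfin.mono fun x hx => (ENNReal.ofReal_toReal hx).symm)
      _ = ∫⁻ s in Ioi (0 : ℝ), μ {x | s < (f x).toReal} :=
          lintegral_eq_lintegral_meas_lt μ (ae_of_all _ fun x => ENNReal.toReal_nonneg)
            hf.ennreal_toReal
      _ = ∫⁻ s in Ioi (0 : ℝ), μ {x | ENNReal.ofReal s < f x} := by
          refine setLIntegral_congr_fun measurableSet_Ioi fun s hs => measure_congr ?_
          filter_upwards [hfin] with x hx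
          exact propext (ENNReal.ofReal_lt_iff_lt_toReal (le_of_lt hs) hx).symm
  · have htop : μ {x | f x = ⊤} ≠ 0 := by simpa [ae_iff] using hfin
    rw [lintegral_eq_top_of_measure_eq_top_ne_zero hf htop, eq_comm, eq_top_iff]
    calc (⊤ : ℝ≥0∞) = ∫⁻ _ in Ioi (0 : ℝ), μ {x | f x = ⊤} := by
          rw [setLIntegral_const, Real.volume_Ioi, ENNReal.mul_top htop]
      _ ≤ ∫⁻ s in Ioi (0 : ℝ), μ {x | ENNReal.ofReal s < f x} :=
          lintegral_mono fun s => measure_mono fun x hx =>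
            ENNReal.ofReal_lt_top.trans_eq (Eq.symm hx)

theorem lintegral_le_of_meas_lt_le (hf : AEMeasurable f μ) (hg : AEMeasurable g μ)
    (h : ∀ t : ℝ≥0∞, μ {x | t < g x} ≤ C * μ {x | t < f x}) :
    ∫⁻ x, g x ∂μ ≤ C * ∫⁻ x, f x ∂μ := by
  have hanti : Antitone fun s : ℝ => μ {x | ENNReal.ofReal s < f x} := fun s s' hs =>
    measure_mono fun x hx => (ENNReal.ofReal_le_ofReal hs).trans_lt hx
  rw [lintegral_eq_lintegral_meas_ofReal_lt hf, lintegral_eq_lintegral_meas_ofReal_lt hg,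
    ← lintegral_const_mul _ hanti.measurable]
  exact lintegral_mono fun s => h _

theorem essSup_le_of_meas_lt_le (h : ∀ t : ℝ≥0∞, μ {x | t < g x} ≤ C * μ {x | t < f x}) :
    essSup g μ ≤ essSup f μ := by
  refine le_of_not_gt fun hlt => lt_essSup_iff.1 hlt ?_
  simpa [meas_essSup_lt (f := f)] using h (essSup f μ)

theorem lqNormE_mono_ae (q : ℝ≥0∞) (h : f ≤ᵐ[μ] g) : lqNormE q μ f ≤ lqNormE q μ g := by
  unfold lqNormE
  split_ifs
  · exact essSup_mono_ae h
  · gcongr ?_ ^ _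
    exact lintegral_mono_ae (h.mono fun x hx => ENNReal.rpow_le_rpow hx ENNReal.toReal_nonneg)

theorem lqNormE_le_of_meas_lt_le (hf : AEMeasurable f μ) (hg : AEMeasurable g μ) (hq : q ≠ 0)
    (h : ∀ t : ℝ≥0∞, μ {x | t < g x} ≤ C * μ {x | t < f x}) :
    lqNormE q μ g ≤ C ^ (1 / q.toReal) * lqNormE q μ f := by
  unfold lqNormE
  split_ifs with hq_top
  · simpa [hq_top] using essSup_le_of_meas_lt_le h
  · have hq_pos : 0 < q.toReal := ENNReal.toReal_pos hq hq_top
    rw [← ENNReal.mul_rpow_of_nonneg _ _ (by positivity)]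
    gcongr
    refine lintegral_le_of_meas_lt_le (hf.pow_const _) (hg.pow_const _) fun t => ?_
    simpa only [one_div, ENNReal.rpow_inv_lt_iff hq_pos] using h (t ^ (1 / q.toReal))

end DistributionFunction

theorem statement_4_general {E : Type*} [NormedAddCommGroup E] (n : ℕ) {d a b : ℝ} (A : ℝ)
    (hd : 0 ≤ d) (ha : 0 < a) (hab : a ≤ b) :
    ∃ C : ℝ, 0 < C ∧ ∀ Ω : Set (Euc n), IsOpen Ω → AhlforsRegular d A (frontier Ω) →
      ∀ F : Euc n → E,
        (∀ t : ℝ≥0∞, hm n d {ξ | ξ ∈ frontier Ω ∧ t < ntMax Ω b F ξ} ≤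
          ENNReal.ofReal C * hm n d {ξ | ξ ∈ frontier Ω ∧ t < ntMax Ω a F ξ}) ∧
        ∀ q : ℝ≥0∞, q ≠ 0 →
          lqNormE q ((hm n d).restrict (frontier Ω)) (ntMax Ω a F) ≤
              lqNormE q ((hm n d).restrict (frontier Ω)) (ntMax Ω b F) ∧
            lqNormE q ((hm n d).restrict (frontier Ω)) (ntMax Ω b F) ≤
              ENNReal.ofReal (C ^ (1 / q.toReal)) *
                lqNormE q ((hm n d).restrict (frontier Ω)) (ntMax Ω a F) := by
  obtain ⟨C, hC, hlevel⟩ := exists_hm_restrict_lt_ntMax_le (E := E) n A b hd ha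
  refine ⟨C, hC, fun Ω hΩ hreg F => ⟨fun t => ?_, fun q hq => ⟨?_, ?_⟩⟩⟩
  · have hrestrict : ∀ c, hm n d {ξ | ξ ∈ frontier Ω ∧ t < ntMax Ω c F ξ} =
        (hm n d).restrict (frontier Ω) {ξ | t < ntMax Ω c F ξ} := fun c => by
      rw [Measure.restrict_apply' measurableSet_frontier, inter_comm]
      rfl
    rw [hrestrict, hrestrict, ENNReal.ofReal_coe_nnreal]
    exact hlevel hΩ hreg F t
  · exact lqNormE_mono_ae q (ae_of_all _ fun ξ => ntMax_mono_of_ntCone_subset (ntCone_mono hab ξ))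
  · rw [← ENNReal.ofReal_rpow_of_pos (NNReal.coe_pos.2 hC), ENNReal.ofReal_coe_nnreal]
    exact lqNormE_le_of_meas_lt_le (measurable_ntMax hΩ F a).aemeasurable
      (measurable_ntMax hΩ F b).aemeasurable hq (hlevel hΩ hreg F)

/-- change of aperture for the nontangential maximal function.
If `∂Ω` is `d`-Ahlfors regular and `0 < a < b`, then
`σ({N_b F > λ}) ≤ C σ({N_a F > λ})` and the `L^q(∂Ω,σ)` norms of `N_a F` and `N_b F`
are comparable. -/
theorem statement_4 (n : ℕ) (d A₀ a b : ℝ) (hd0 : 0 < d) (hdn : d < n)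
    (ha : 0 < a) (hab : a < b) :
    ∃ C : ℝ, 0 < C ∧
      ((∀ Ω : Set (Euc n), IsOpen Ω → AhlforsRegular d A₀ (frontier Ω) →
        ∀ F : Euc n → ℝ, Measurable F → ∀ lam : ℝ, 0 < lam →
          hm n d {ξ | ξ ∈ frontier Ω ∧ ENNReal.ofReal lam < ntMax Ω b F ξ} ≤
            ENNReal.ofReal C *
              hm n d {ξ | ξ ∈ frontier Ω ∧ ENNReal.ofReal lam < ntMax Ω a F ξ}) ∧
      ∀ q : ℝ≥0∞, 1 ≤ q → ∃ C' : ℝ, 0 < C' ∧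
        ∀ Ω : Set (Euc n), IsOpen Ω → AhlforsRegular d A₀ (frontier Ω) →
          ∀ F : Euc n → ℝ, Measurable F →
            lqNormE q ((hm n d).restrict (frontier Ω)) (ntMax Ω a F) ≤
                lqNormE q ((hm n d).restrict (frontier Ω)) (ntMax Ω b F) ∧
              lqNormE q ((hm n d).restrict (frontier Ω)) (ntMax Ω b F) ≤
                ENNReal.ofReal C' *
                  lqNormE q ((hm n d).restrict (frontier Ω)) (ntMax Ω a F)) := by
  obtain ⟨C, hC, h⟩ := statement_4_general (E := ℝ) n A₀ hd0.le ha hab.le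
  exact ⟨C, hC, fun Ω hΩ hreg F _ lam _ => (h Ω hΩ hreg F).1 _, fun q hq =>
    ⟨C ^ (1 / q.toReal), by positivity, fun Ω hΩ hreg F _ =>
      (h Ω hΩ hreg F).2 q (zero_lt_one.trans_le hq).ne'⟩⟩

end Paper
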